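/- Let M be a reduced G_C-perfect R-module of G_C-dimension n, and let k ≥ 0 be an integer. Then M is C-k-torsionless if and only if grade_R(Ext_R^n(M,C)) ≥ n + k. -/

import Mathlib

open CategoryTheory TensorProduct

noncomputable section

universe u

variable (R : Type u) [CommRing R]

/-- The `i`-th Ext module `Ext_R^i(M, N)`. -/
def ExtM (M N : ModuleCat.{u} R) (i : ℕ) : ModuleCat.{u} R :=
  ((Ext R (ModuleCat.{u} R) i).obj (Opposite.op M)).obj N

/-- The `i`-th Tor module `Tor_i^R(M, N)`. -/
def TorM (M N : ModuleCat.{u} R) (i : ℕ) : ModuleCat.{u} R :=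
  ((Tor (ModuleCat.{u} R) i).obj M).obj N

/-- The biduality (evaluation) map `M → Hom_R(Hom_R(M, C), C)`. -/
def bidualityMap (C M : ModuleCat.{u} R) :
    ↥M →ₗ[R] ((↥M →ₗ[R] ↥C) →ₗ[R] ↥C) :=
  (LinearMap.id : (↥M →ₗ[R] ↥C) →ₗ[R] (↥M →ₗ[R] ↥C)).flip

/-- `C` is a semidualizing `R`-module. -/
def IsSemidualizing (C : ModuleCat.{u} R) : Prop :=
  Module.Finite R ↥C ∧
  Function.Bijective (fun r : R => (r • LinearMap.id : ↥C →ₗ[R] ↥C)) ∧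
  ∀ i : ℕ, 0 < i → Subsingleton (ExtM R C C i)

/-- `M` is totally `C`-reflexive. -/
def IsTotallyCReflexive (C M : ModuleCat.{u} R) : Prop :=
  Module.Finite R ↥M ∧
  Function.Bijective (bidualityMap R C M) ∧
  (∀ i : ℕ, 0 < i → Subsingleton (ExtM R M C i)) ∧
  (∀ i : ℕ, 0 < i → Subsingleton (ExtM R (ModuleCat.of R (↥M →ₗ[R] ↥C)) C i))

/-- `G_C`-dimension of `M` is at most `n`: there is an exact sequence
`0 → X_n → ⋯ → X_0 → M → 0` with each `X_i` totally `C`-reflexive. -/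
def gcdimLE (C : ModuleCat.{u} R) : ℕ → ModuleCat.{u} R → Prop
  | 0, M => IsTotallyCReflexive R C M
  | n+1, M => ∃ (X K : ModuleCat.{u} R) (f : ↥K →ₗ[R] ↥X) (g : ↥X →ₗ[R] ↥M),
      Function.Injective f ∧ Function.Surjective g ∧
      LinearMap.ker g = LinearMap.range f ∧
      IsTotallyCReflexive R C X ∧ gcdimLE C n K

/-- The `G_C`-dimension of `M`, as an element of `ℕ∞`. -/
def gcdim (C M : ModuleCat.{u} R) : ℕ∞ :=
  sInf ((fun n : ℕ => (n : ℕ∞)) '' {n | gcdimLE R C n M})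

/-- `grade_R(M) = inf { i | Ext_R^i(M, R) ≠ 0 }`, with `grade 0 = ∞`. -/
def gradeR (M : ModuleCat.{u} R) : ℕ∞ :=
  sInf ((fun i : ℕ => (i : ℕ∞)) ''
    {i | ¬ Subsingleton (ExtM R M (ModuleCat.of R R) i)})

/-- Reduced grade of `M` with respect to `C`. -/
def rgrade (C M : ModuleCat.{u} R) : ℕ∞ :=
  sInf ((fun i : ℕ => (i : ℕ∞)) ''
    {i | 0 < i ∧ ¬ Subsingleton (ExtM R M C i)})

/-- `M` is reduced `G_C`-perfect. -/
def IsReducedGCPerfect (C M : ModuleCat.{u} R) : Prop :=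
  gcdim R C M ≠ ⊤ ∧ rgrade R C M = gcdim R C M

/-- `M` is `G_C`-perfect. -/
def IsGCPerfect (C M : ModuleCat.{u} R) : Prop :=
  gcdim R C M ≠ ⊤ ∧ gradeR R M = gcdim R C M

/-- `π : P → M` is a projective cover: `P` projective, `π` surjective with superfluous kernel. -/
def IsProjectiveCover {P M : ModuleCat.{u} R} (π : ↥P →ₗ[R] ↥M) : Prop :=
  Module.Projective R ↥P ∧ Function.Surjective π ∧
  ∀ N : Submodule R ↥P, N ⊔ LinearMap.ker π = ⊤ → N = ⊤

/-- `P₁ →d P₀ →π M → 0` is a minimal projective presentation of `M`. -/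
def IsMinimalPresentation {P1 P0 M : ModuleCat.{u} R}
    (d : ↥P1 →ₗ[R] ↥P0) (π : ↥P0 →ₗ[R] ↥M) : Prop :=
  Module.Finite R ↥P1 ∧ Module.Finite R ↥P0 ∧
  IsProjectiveCover R π ∧
  LinearMap.range d = LinearMap.ker π ∧
  Module.Projective R ↥P1 ∧
  ∀ N : Submodule R ↥P1, N ⊔ LinearMap.ker d = ⊤ → N = ⊤

/-- `T` is (a module isomorphic to) the transpose `Tr_C(M)` of `M` with respect to `C`,
computed from a minimal projective presentation of `M`. -/
def IsTransposeC (C M T : ModuleCat.{u} R) : Prop :=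
  ∃ (P1 P0 : ModuleCat.{u} R) (d : ↥P1 →ₗ[R] ↥P0) (π : ↥P0 →ₗ[R] ↥M),
    IsMinimalPresentation R d π ∧
    Nonempty (↥T ≃ₗ[R]
      ((↥P1 →ₗ[R] ↥C) ⧸ LinearMap.range (LinearMap.lcomp R ↥C d)))

/-- `T` is the usual Auslander transpose `Tr(M) = Tr_R(M)`. -/
def IsTranspose (M T : ModuleCat.{u} R) : Prop :=
  IsTransposeC R (ModuleCat.of R R) M T

/-- `S` is (a module isomorphic to) the first syzygy `Ω N`, i.e. the kernel of a
projective cover of `N`. -/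
def IsSyzygyOf (N S : ModuleCat.{u} R) : Prop :=
  ∃ (P : ModuleCat.{u} R) (π : ↥P →ₗ[R] ↥N),
    Module.Finite R ↥P ∧ IsProjectiveCover R π ∧
    Nonempty (↥S ≃ₗ[R] LinearMap.ker π)

/-- `S` is (a module isomorphic to) the `n`-th syzygy `Ωⁿ M`. -/
def IsNthSyzygy : ℕ → ModuleCat.{u} R → ModuleCat.{u} R → Prop
  | 0, M, S => Nonempty (↥S ≃ₗ[R] ↥M)
  | n+1, M, S => ∃ K : ModuleCat.{u} R, IsNthSyzygy n M K ∧ IsSyzygyOf R K S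

/-- `L` is (a module isomorphic to) `λ M = Ω Tr M`. -/
def IsLambda (M L : ModuleCat.{u} R) : Prop :=
  ∃ T : ModuleCat.{u} R, IsTranspose R M T ∧ IsSyzygyOf R T L

/-- `M` is horizontally linked, i.e. `M ≅ λλM`. -/
def IsHorizontallyLinked (M : ModuleCat.{u} R) : Prop :=
  ∃ L L2 : ModuleCat.{u} R, IsLambda R M L ∧ IsLambda R L L2 ∧
    Nonempty (↥M ≃ₗ[R] ↥L2)

/-- `M` is stable: it has no non-zero projective direct summand. -/
def IsStable (M : ModuleCat.{u} R) : Prop :=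
  ∀ (P N : ModuleCat.{u} R), Module.Projective R ↥P →
    Nonempty (↥M ≃ₗ[R] (↥P × ↥N)) → Subsingleton ↥P

/-- `N` belongs to the Auslander class `A_C`. -/
def MemAuslanderClass (C N : ModuleCat.{u} R) : Prop :=
  Function.Bijective (TensorProduct.mk R ↥N ↥C) ∧
  (∀ i : ℕ, 0 < i → Subsingleton (TorM R C N i)) ∧
  (∀ i : ℕ, 0 < i → Subsingleton
    (ExtM R C (ModuleCat.of R (↥N ⊗[R] ↥C)) i))

/-- `R` is semiperfect: every finite `R`-module has a projective cover. -/
def IsSemiperfectRing : Prop :=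
  ∀ M : ModuleCat.{u} R, Module.Finite R ↥M →
    ∃ (P : ModuleCat.{u} R) (π : ↥P →ₗ[R] ↥M),
      Module.Finite R ↥P ∧ IsProjectiveCover R π

/-- Depth over a local ring, via Ext from the residue field. -/
def rdepth [IsLocalRing R] (M : ModuleCat.{u} R) : ℕ∞ :=
  sInf ((fun i : ℕ => (i : ℕ∞)) ''
    {i | ¬ Subsingleton
      (ExtM R (ModuleCat.of R (IsLocalRing.ResidueField R)) M i)})

/-- Projective dimension at most `n`. -/
def pdimLE : ℕ → ModuleCat.{u} R → Prop
  | 0, M => Module.Projective R ↥M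
  | n+1, M => ∃ (X K : ModuleCat.{u} R) (f : ↥K →ₗ[R] ↥X) (g : ↥X →ₗ[R] ↥M),
      Function.Injective f ∧ Function.Surjective g ∧
      LinearMap.ker g = LinearMap.range f ∧
      Module.Projective R ↥X ∧ pdimLE n K

/-- Projective dimension, as an element of `ℕ∞`. -/
def pdim (M : ModuleCat.{u} R) : ℕ∞ :=
  sInf ((fun n : ℕ => (n : ℕ∞)) '' {n | pdimLE R n M})

/-- `M` is `C`-`k`-torsionless. -/
def IsCkTorsionless (C M : ModuleCat.{u} R) (k : ℕ) : Prop :=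
  k = 0 ∨ ∀ T : ModuleCat.{u} R, IsTransposeC R C M T →
    ∀ i : ℕ, 1 ≤ i → i ≤ k → Subsingleton (ExtM R T C i)

/-- `M` is a `C`-syzygy: it embeds into `P ⊗_R C` with `P` finite projective. -/
def IsCSyzygy (C M : ModuleCat.{u} R) : Prop :=
  ∃ (P : ModuleCat.{u} R), Module.Finite R ↥P ∧ Module.Projective R ↥P ∧
    ∃ f : ↥M →ₗ[R] (↥P ⊗[R] ↥C), Function.Injective f


/-- There is an exact sequence `0 → N → X_k → ⋯ → X_1 → M → 0` of finite `R`-modules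
with `Ext_R^i(X_j, C) = 0` for all `i > 0` and all `j`. -/
def ExtVanishingChain (C : ModuleCat.{u} R) : ℕ → ModuleCat.{u} R → ModuleCat.{u} R → Prop
  | 0, N, M => Nonempty (↥N ≃ₗ[R] ↥M)
  | k+1, N, M => ∃ (X K : ModuleCat.{u} R) (f : ↥K →ₗ[R] ↥X) (g : ↥X →ₗ[R] ↥M),
      Function.Injective f ∧ Function.Surjective g ∧
      LinearMap.ker g = LinearMap.range f ∧
      Module.Finite R ↥X ∧ (∀ i : ℕ, 0 < i → Subsingleton (ExtM R X C i)) ∧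
      ExtVanishingChain C k N K

/-!
Applying `Hom(-, C)` to a projective resolution `⋯ → P₁ → P₀` of `M` gives a complex which is exact
in the degrees `i > 0` with `Ext^i(M, C) = 0`. So if `Ext^1(M, C) = 0` and `K` is a syzygy of `M`,
there is an exact sequence `0 → Tr_C M → P₂^C → Tr_C K → 0`, and `Ext^i(Tr_C M, C)` is
`Ext^(i+1)(Tr_C K, C)`, while `Ext^1(Tr_C K, C) = 0` by biduality and `Ext^n(K, C)` is
`Ext^(n+1)(M, C)`. This reduces the theorem to `n = 1`, where a syzygy of `M` is totally
`C`-reflexive, so that `Tr_C M` is an extension of a module `X` with `Ext^i(X, C) = 0` for `i > 0`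
by `Ext^1(M, C)`.

What comes out is a condition on `Ext^i(Ext^n(M, C), C)`. It is a condition on the grade because
`Hom(A, R)` is `Hom(C, A^C)`, so that `Ext^i(-, R)` and `Ext^i(-, C)` start to be nonzero in the
same degree.
-/

section Ext

variable {R}

open Limits in
instance linearYoneda_obj_preservesFiniteLimits (N : ModuleCat.{u} R) :
    PreservesFiniteLimits ((linearYoneda R (ModuleCat.{u} R)).obj N) :=
  have : PreservesFiniteLimits
      ((linearYoneda R (ModuleCat.{u} R)).obj N ⋙ forget (ModuleCat.{u} R)) :=
    inferInstanceAs (PreservesFiniteLimits (yoneda.obj N))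
  preservesFiniteLimits_of_reflects_of_preserves _ (forget (ModuleCat.{u} R))

/-- In degree zero, `Ext` is `Hom`. -/
def extMZeroEquivHom (M N : ModuleCat.{u} R) : ExtM R M N 0 ≃ₗ[R] (M ⟶ N) :=
  let F := (linearYoneda R (ModuleCat.{u} R)).obj N
  have := Limits.preservesFiniteColimits_rightOp F
  (F.rightOp.leftDerivedZeroIsoSelf.app M).unop.symm.toLinearEquiv

lemma smul_extMk {M N : ModuleCat.{u} R} (P : ProjectiveResolution M) {n m : ℕ}
    (f : P.complex.X n ⟶ N) (hm : n + 1 = m) (hf : P.complex.d m n ≫ f = 0) (r : R)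
    (hrf : P.complex.d m n ≫ (r • f) = 0) :
    P.extMk (r • f) m hm hrf = r • P.extMk f m hm hf := by
  rw [Abelian.Ext.smul_eq_comp_mk₀, P.extMk_comp_mk₀]
  congr 1

lemma nonempty_extM_succ_equiv_abelianExt (M N : ModuleCat.{u} R) (n : ℕ) :
    Nonempty (ExtM R M N (n + 1) ≃ₗ[R] Abelian.Ext M N (n + 1)) := by
  let P := projectiveResolution M
  let K := P.complex.linearYonedaObj R N
  let S := K.sc' n (n + 1) (n + 2)
  let homologyIso : ExtM R M N (n + 1) ≅ S.moduleCatLeftHomologyData.H :=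
    P.isoExt (n + 1) N ≪≫
      ShortComplex.homologyMapIso (K.isoSc' n (n + 1) (n + 2) (by simp) (by simp)) ≪≫
      S.moduleCatHomologyIso
  let cocycleClass : LinearMap.ker S.g.hom →ₗ[R] Abelian.Ext M N (n + 1) :=
    { toFun := fun f => P.extMk (n := n + 1) f.1 (n + 2) rfl f.2
      map_add' := fun _ _ => (P.add_extMk _ _ _ _ _ _).symm
      map_smul' := fun r f => smul_extMk P _ _ f.2 r (r • f).2 }
  have surjective : Function.Surjective cocycleClass := fun α => by
    obtain ⟨f, hf, h⟩ := P.extMk_surjective α (n + 2) rfl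
    exact ⟨⟨f, hf⟩, h⟩
  have ker_eq : LinearMap.range S.moduleCatToCycles = LinearMap.ker cocycleClass := by
    ext f
    refine Iff.trans ?_ (P.extMk_eq_zero_iff f.1 (n + 2) rfl f.2 n rfl).symm
    exact exists_congr fun g => Subtype.ext_iff
  exact ⟨homologyIso.toLinearEquiv.trans
    ((Submodule.quotEquivOfEq _ _ ker_eq).trans
      (cocycleClass.quotKerEquivOfSurjective surjective))⟩

lemma subsingleton_extM_iff (M N : ModuleCat.{u} R) (i : ℕ) :
    Subsingleton (ExtM R M N i) ↔ Subsingleton (Abelian.Ext M N i) := by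
  cases i with
  | zero =>
    rw [(extMZeroEquivHom M N).toEquiv.subsingleton_congr,
      Abelian.Ext.homEquiv₀.subsingleton_congr]
  | succ n =>
    obtain ⟨e⟩ := nonempty_extM_succ_equiv_abelianExt M N n
    exact e.toEquiv.subsingleton_congr

end Ext

section ExtVanishing

/-- The vanishing of `Ext_R^i(A, N)`, for unbundled modules `A` and `N`. -/
def ExtVanishes (A N : Type u) [AddCommGroup A] [Module R A] [AddCommGroup N] [Module R N]
    (i : ℕ) : Prop :=
  Subsingleton (ExtM R (ModuleCat.of R A) (ModuleCat.of R N) i)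

variable {R}
variable {A B N : Type u} [AddCommGroup A] [Module R A] [AddCommGroup B] [Module R B]
  [AddCommGroup N] [Module R N] {i : ℕ}

lemma extVanishes_iff_forall_eq_zero :
    ExtVanishes R A N i ↔ ∀ x : Abelian.Ext (ModuleCat.of R A) (ModuleCat.of R N) i, x = 0 :=
  (subsingleton_extM_iff _ _ i).trans (subsingleton_iff_forall_eq 0)

lemma ExtVanishes.eq_zero (h : ExtVanishes R A N i)
    (x : Abelian.Ext (ModuleCat.of R A) (ModuleCat.of R N) i) : x = 0 :=
  extVanishes_iff_forall_eq_zero.1 h x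

lemma extVanishes_zero_iff : ExtVanishes R A N 0 ↔ Subsingleton (A →ₗ[R] N) :=
  (extMZeroEquivHom _ _).toEquiv.subsingleton_congr.trans
    ModuleCat.homEquiv.subsingleton_congr

lemma extVanishes_of_projective [Module.Projective R A] (hi : 0 < i) : ExtVanishes R A N i := by
  obtain ⟨j, rfl⟩ := Nat.exists_eq_succ_of_ne_zero hi.ne'
  have : Projective (ModuleCat.of R A) := (IsProjective.iff_projective A).1 inferInstance
  exact extVanishes_iff_forall_eq_zero.2 Abelian.Ext.eq_zero_of_projective

namespace ExtVanishes

lemma of_retract_left (s : A →ₗ[R] B) (r : B →ₗ[R] A) (hrs : r ∘ₗ s = LinearMap.id)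
    (hB : ExtVanishes R B N i) : ExtVanishes R A N i := by
  refine extVanishes_iff_forall_eq_zero.2 fun x => ?_
  have hid : ModuleCat.ofHom s ≫ ModuleCat.ofHom r = 𝟙 (ModuleCat.of R A) := by
    rw [← ModuleCat.ofHom_comp, hrs, ModuleCat.ofHom_id]
  calc x = (Abelian.Ext.mk₀ (ModuleCat.ofHom s)).comp
        ((Abelian.Ext.mk₀ (ModuleCat.ofHom r)).comp x (zero_add i)) (zero_add i) := by
        rw [Abelian.Ext.mk₀_comp_mk₀_assoc, hid, Abelian.Ext.mk₀_id_comp]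
    _ = 0 := by rw [hB.eq_zero (Abelian.Ext.comp _ x _), Abelian.Ext.comp_zero]

lemma of_retract_right (s : A →ₗ[R] B) (r : B →ₗ[R] A) (hrs : r ∘ₗ s = LinearMap.id)
    (hB : ExtVanishes R N B i) : ExtVanishes R N A i := by
  refine extVanishes_iff_forall_eq_zero.2 fun x => ?_
  have hid : ModuleCat.ofHom s ≫ ModuleCat.ofHom r = 𝟙 (ModuleCat.of R A) := by
    rw [← ModuleCat.ofHom_comp, hrs, ModuleCat.ofHom_id]
  calc x = (x.comp (Abelian.Ext.mk₀ (ModuleCat.ofHom s)) (add_zero i)).comp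
        (Abelian.Ext.mk₀ (ModuleCat.ofHom r)) (add_zero i) := by
        rw [Abelian.Ext.comp_assoc_of_second_deg_zero, Abelian.Ext.mk₀_comp_mk₀, hid,
          Abelian.Ext.comp_mk₀_id]
    _ = 0 := by rw [hB.eq_zero (x.comp _ _), Abelian.Ext.zero_comp]

lemma congr_left (e : A ≃ₗ[R] B) : ExtVanishes R A N i ↔ ExtVanishes R B N i :=
  ⟨of_retract_left e.symm.toLinearMap e.toLinearMap (LinearMap.ext e.apply_symm_apply),
    of_retract_left e.toLinearMap e.symm.toLinearMap (LinearMap.ext e.symm_apply_apply)⟩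

lemma congr_right (e : A ≃ₗ[R] B) : ExtVanishes R N A i ↔ ExtVanishes R N B i :=
  ⟨of_retract_right e.symm.toLinearMap e.toLinearMap (LinearMap.ext e.apply_symm_apply),
    of_retract_right e.toLinearMap e.symm.toLinearMap (LinearMap.ext e.symm_apply_apply)⟩

end ExtVanishes

end ExtVanishing

section ShortExact

variable {R}
variable {A B D N : Type u} [AddCommGroup A] [Module R A] [AddCommGroup B] [Module R B]
  [AddCommGroup D] [Module R D] [AddCommGroup N] [Module R N]

/-- `0 → A → B → D → 0` is a short exact sequence of unbundled modules. -/
structure IsShortExact (f : A →ₗ[R] B) (g : B →ₗ[R] D) : Prop where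
  injective : Function.Injective f
  surjective : Function.Surjective g
  exact : Function.Exact f g

lemma isShortExact_ker {g : B →ₗ[R] D} (hg : Function.Surjective g) :
    IsShortExact (LinearMap.ker g).subtype g :=
  ⟨Subtype.val_injective, hg, g.exact_subtype_ker_map⟩

lemma isShortExact_mkQ (S : Submodule R B) : IsShortExact S.subtype S.mkQ :=
  ⟨Subtype.val_injective, S.mkQ_surjective, LinearMap.exact_subtype_mkQ S⟩

lemma isShortExact_range_mkQ {f : A →ₗ[R] B} (hf : Function.Injective f) :
    IsShortExact f (LinearMap.range f).mkQ :=
  ⟨hf, Submodule.mkQ_surjective _, LinearMap.exact_map_mkQ_range f⟩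

lemma isShortExact_inl_snd : IsShortExact (LinearMap.inl R A B) (LinearMap.snd R A B) :=
  ⟨LinearMap.inl_injective, LinearMap.snd_surjective, Function.Exact.inl_snd⟩

namespace IsShortExact

variable {f : A →ₗ[R] B} {g : B →ₗ[R] D} {i : ℕ}

lemma exists_comp_eq (h : IsShortExact f g) (φ : N →ₗ[R] B) (hφ : g ∘ₗ φ = 0) :
    ∃ ψ : N →ₗ[R] A, f ∘ₗ ψ = φ := by
  have hmem : ∀ x, φ x ∈ LinearMap.range f := fun x => (h.exact _).1 (LinearMap.congr_fun hφ x)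
  let e := LinearEquiv.ofInjective f h.injective
  refine ⟨e.symm.toLinearMap ∘ₗ φ.codRestrict _ hmem, LinearMap.ext fun x => ?_⟩
  exact congrArg Subtype.val (e.apply_symm_apply (φ.codRestrict _ hmem x))

/-- The short complex in `ModuleCat R` underlying a short exact sequence of linear maps. -/
abbrev toShortComplex (h : IsShortExact f g) : ShortComplex (ModuleCat.{u} R) :=
  ShortComplex.mk (ModuleCat.ofHom f) (ModuleCat.ofHom g)
    (ModuleCat.hom_ext h.exact.linearMap_comp_eq_zero)

lemma shortExact (h : IsShortExact f g) : h.toShortComplex.ShortExact where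
  exact := (ShortComplex.ShortExact.moduleCat_exact_iff_function_exact _).2 h.exact
  mono_f := (ModuleCat.mono_iff_injective _).2 h.injective
  epi_g := (ModuleCat.epi_iff_surjective _).2 h.surjective

lemma extVanishes_left (h : IsShortExact f g) (hB : ExtVanishes R B N i)
    (hD : ExtVanishes R D N (i + 1)) : ExtVanishes R A N i := by
  refine extVanishes_iff_forall_eq_zero.2 fun x => ?_
  obtain ⟨y, rfl⟩ := Abelian.Ext.contravariant_sequence_exact₁ h.shortExact _ x
    (add_comm 1 i) (hD.eq_zero _)
  rw [hB.eq_zero y, Abelian.Ext.comp_zero]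

lemma extVanishes_middle (h : IsShortExact f g) (hA : ExtVanishes R A N i)
    (hD : ExtVanishes R D N i) : ExtVanishes R B N i := by
  refine extVanishes_iff_forall_eq_zero.2 fun x => ?_
  obtain ⟨y, rfl⟩ := Abelian.Ext.contravariant_sequence_exact₂ h.shortExact _ x (hA.eq_zero _)
  rw [hD.eq_zero y, Abelian.Ext.comp_zero]

lemma extVanishes_right (h : IsShortExact f g) (hA : ExtVanishes R A N i)
    (hB : ExtVanishes R B N (i + 1)) : ExtVanishes R D N (i + 1) := by
  refine extVanishes_iff_forall_eq_zero.2 fun x => ?_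
  obtain ⟨y, rfl⟩ := Abelian.Ext.contravariant_sequence_exact₃ h.shortExact _ x
    (hB.eq_zero _) (add_comm 1 i)
  rw [hA.eq_zero y, Abelian.Ext.comp_zero]

lemma covariant_extVanishes_middle (h : IsShortExact f g) (hA : ExtVanishes R N A i)
    (hD : ExtVanishes R N D i) : ExtVanishes R N B i := by
  refine extVanishes_iff_forall_eq_zero.2 fun x => ?_
  obtain ⟨y, rfl⟩ := Abelian.Ext.covariant_sequence_exact₂ _ h.shortExact x (hD.eq_zero _)
  rw [hA.eq_zero y, Abelian.Ext.zero_comp]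

lemma covariant_extVanishes_right (h : IsShortExact f g) (hB : ExtVanishes R N B i)
    (hA : ExtVanishes R N A (i + 1)) : ExtVanishes R N D i := by
  refine extVanishes_iff_forall_eq_zero.2 fun x => ?_
  obtain ⟨y, rfl⟩ := Abelian.Ext.covariant_sequence_exact₃ _ h.shortExact x rfl (hA.eq_zero _)
  rw [hB.eq_zero y, Abelian.Ext.zero_comp]

lemma exists_lift (h : IsShortExact f g) (hA : ExtVanishes R N A 1) (φ : N →ₗ[R] D) :
    ∃ ψ : N →ₗ[R] B, g ∘ₗ ψ = φ := by
  obtain ⟨y, hy⟩ := Abelian.Ext.covariant_sequence_exact₃ _ h.shortExact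
    (Abelian.Ext.mk₀ (ModuleCat.ofHom φ)) rfl (hA.eq_zero _)
  obtain ⟨ψ, rfl⟩ := (Abelian.Ext.mk₀_bijective _ _).2 y
  rw [Abelian.Ext.mk₀_comp_mk₀] at hy
  exact ⟨ψ.hom, congrArg ModuleCat.Hom.hom ((Abelian.Ext.mk₀_bijective _ _).1 hy)⟩

lemma extClass_comp_mk₀_eq_zero_iff (h : IsShortExact f g) (φ : A →ₗ[R] N) :
    h.shortExact.extClass.comp (Abelian.Ext.mk₀ (ModuleCat.ofHom φ)) (add_zero 1) = 0 ↔
      φ ∈ LinearMap.range (LinearMap.lcomp R N f) := by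
  constructor
  · intro hφ
    obtain ⟨y, hy⟩ := Abelian.Ext.contravariant_sequence_exact₁ h.shortExact _ _ (add_zero 1) hφ
    obtain ⟨ψ, rfl⟩ := (Abelian.Ext.mk₀_bijective _ _).2 y
    rw [Abelian.Ext.mk₀_comp_mk₀] at hy
    exact ⟨ψ.hom, congrArg ModuleCat.Hom.hom ((Abelian.Ext.mk₀_bijective _ _).1 hy)⟩
  · rintro ⟨ψ, rfl⟩
    have hψ : ModuleCat.ofHom (LinearMap.lcomp R N f ψ) =
        h.toShortComplex.f ≫ ModuleCat.ofHom ψ := rfl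
    rw [hψ, ← Abelian.Ext.mk₀_comp_mk₀, h.shortExact.extClass_comp_assoc]

lemma lcomp_surjective (h : IsShortExact f g) (hD : ExtVanishes R D N 1) :
    Function.Surjective (LinearMap.lcomp R N f) := fun φ =>
  (h.extClass_comp_mk₀_eq_zero_iff φ).1 (hD.eq_zero _)

lemma lcomp (h : IsShortExact f g) (hD : ExtVanishes R D N 1) :
    IsShortExact (LinearMap.lcomp R N g) (LinearMap.lcomp R N f) :=
  ⟨LinearMap.lcomp_injective_of_surjective g h.surjective, h.lcomp_surjective hD,
    LinearMap.exact_lcomp_of_exact_of_surjective N h.exact h.surjective⟩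

lemma nonempty_extM_equiv_extM_succ (h : IsShortExact f g) (hB : ExtVanishes R B N (i + 1))
    (hB' : ExtVanishes R B N (i + 2)) :
    Nonempty (ExtM R (ModuleCat.of R A) (ModuleCat.of R N) (i + 1) ≃ₗ[R]
      ExtM R (ModuleCat.of R D) (ModuleCat.of R N) (i + 2)) := by
  let δ := h.shortExact.extClass.precompOfLinear R (ModuleCat.of R N) (add_comm 1 (i + 1))
  have hδ : Function.Bijective δ := by
    refine ⟨(injective_iff_map_eq_zero _).2 fun x hx => ?_, fun x => ?_⟩
    · obtain ⟨y, rfl⟩ := Abelian.Ext.contravariant_sequence_exact₁ h.shortExact _ x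
        (add_comm 1 (i + 1)) hx
      rw [hB.eq_zero y, Abelian.Ext.comp_zero]
    · exact Abelian.Ext.contravariant_sequence_exact₃ h.shortExact _ x
        (hB'.eq_zero _) (add_comm 1 (i + 1))
  obtain ⟨eA⟩ := nonempty_extM_succ_equiv_abelianExt (ModuleCat.of R A) (ModuleCat.of R N) i
  obtain ⟨eD⟩ := nonempty_extM_succ_equiv_abelianExt (ModuleCat.of R D) (ModuleCat.of R N) (i + 1)
  exact ⟨eA.trans ((LinearEquiv.ofBijective δ hδ).trans eD.symm)⟩

end IsShortExact

/-- The cokernel of `Hom(B, N) → Hom(A, N)`. For a projective presentation `f` of a module `M` it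
is the transpose of `M` with respect to `N`; for the inclusion of a syzygy of `M` in a projective
module it is `Ext^1(M, N)`. -/
abbrev DualCokernel (N : Type u) [AddCommGroup N] [Module R N] (f : A →ₗ[R] B) : Type u :=
  (A →ₗ[R] N) ⧸ LinearMap.range (LinearMap.lcomp R N f)

lemma IsShortExact.nonempty_dualCokernel_equiv_extM {f : A →ₗ[R] B} {g : B →ₗ[R] D}
    (h : IsShortExact f g) (hB : ExtVanishes R B N 1) :
    Nonempty (DualCokernel N f ≃ₗ[R] ExtM R (ModuleCat.of R D) (ModuleCat.of R N) 1) := by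
  let δ : (A →ₗ[R] N) →ₗ[R] Abelian.Ext (ModuleCat.of R D) (ModuleCat.of R N) 1 :=
    h.shortExact.extClass.precompOfLinear R (ModuleCat.of R N) (add_zero 1) ∘ₗ
      (Abelian.Ext.linearEquiv₀ (R := R)).symm.toLinearMap ∘ₗ
      (ModuleCat.homLinearEquiv (S := R) (M := .of R A) (N := .of R N)).symm.toLinearMap
  have surjective : Function.Surjective δ := by
    intro x
    obtain ⟨y, hy⟩ := Abelian.Ext.contravariant_sequence_exact₃ h.shortExact _ x
      (hB.eq_zero _) (add_zero 1)
    obtain ⟨φ, rfl⟩ := (Abelian.Ext.mk₀_bijective _ _).2 y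
    exact ⟨φ.hom, hy⟩
  have ker_eq : LinearMap.range (LinearMap.lcomp R N f) = LinearMap.ker δ :=
    Submodule.ext fun φ => (h.extClass_comp_mk₀_eq_zero_iff φ).symm
  obtain ⟨eD⟩ := nonempty_extM_succ_equiv_abelianExt (ModuleCat.of R D) (ModuleCat.of R N) 0
  exact ⟨(Submodule.quotEquivOfEq _ _ ker_eq).trans
    ((δ.quotKerEquivOfSurjective surjective).trans eD.symm)⟩

lemma subsingleton_dualCokernel_iff {f : A →ₗ[R] B} :
    Subsingleton (DualCokernel N f) ↔ Function.Surjective (LinearMap.lcomp R N f) := by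
  rw [Submodule.Quotient.subsingleton_iff, LinearMap.range_eq_top]

namespace IsShortExact

variable {f : A →ₗ[R] B} {g : B →ₗ[R] D} {i : ℕ}

lemma extVanishes_one_iff (h : IsShortExact f g) (hB : ExtVanishes R B N 1) :
    ExtVanishes R D N 1 ↔ Function.Surjective (LinearMap.lcomp R N f) := by
  obtain ⟨e⟩ := h.nonempty_dualCokernel_equiv_extM hB
  exact e.toEquiv.subsingleton_congr.symm.trans subsingleton_dualCokernel_iff

lemma extVanishes_succ_iff [Module.Projective R B] (h : IsShortExact f g) (hi : 0 < i) :
    ExtVanishes R D N (i + 1) ↔ ExtVanishes R A N i :=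
  ⟨h.extVanishes_left (extVanishes_of_projective hi),
    fun hA => h.extVanishes_right hA (extVanishes_of_projective i.succ_pos)⟩

end IsShortExact

end ShortExact

section Reflexive

variable {R}
variable {C : ModuleCat.{u} R} {A B D : Type u} [AddCommGroup A] [Module R A] [AddCommGroup B]
  [Module R B] [AddCommGroup D] [Module R D] {i : ℕ}

lemma bidualityMap_injective_iff :
    Function.Injective (bidualityMap R C (.of R A)) ↔
      ∀ a : A, (∀ φ : A →ₗ[R] C, φ a = 0) → a = 0 := by
  rw [injective_iff_map_eq_zero]
  exact forall_congr' fun a => imp_congr_left LinearMap.ext_iff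

lemma bidualityMap_surjective_iff :
    Function.Surjective (bidualityMap R C (.of R A)) ↔
      ∀ Φ : (A →ₗ[R] C) →ₗ[R] C, ∃ a : A, ∀ φ, φ a = Φ φ :=
  forall_congr' fun _ => exists_congr fun _ => LinearMap.ext_iff

namespace IsTotallyCReflexive

lemma finite (hA : IsTotallyCReflexive R C (.of R A)) : Module.Finite R A := hA.1

lemma eq_zero_of_forall_apply_eq_zero (hA : IsTotallyCReflexive R C (.of R A)) {a : A}
    (ha : ∀ φ : A →ₗ[R] C, φ a = 0) : a = 0 :=
  bidualityMap_injective_iff.1 hA.2.1.1 a ha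

lemma exists_apply_eq (hA : IsTotallyCReflexive R C (.of R A)) (Φ : (A →ₗ[R] C) →ₗ[R] C) :
    ∃ a : A, ∀ φ, φ a = Φ φ :=
  bidualityMap_surjective_iff.1 hA.2.1.2 Φ

lemma extVanishes (hA : IsTotallyCReflexive R C (.of R A)) (hi : 0 < i) : ExtVanishes R A C i :=
  hA.2.2.1 i hi

lemma extVanishes_dual (hA : IsTotallyCReflexive R C (.of R A)) (hi : 0 < i) :
    ExtVanishes R (A →ₗ[R] C) C i :=
  hA.2.2.2 i hi

lemma retract (hB : IsTotallyCReflexive R C (.of R B)) (s : A →ₗ[R] B) (r : B →ₗ[R] A)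
    (hrs : r ∘ₗ s = LinearMap.id) : IsTotallyCReflexive R C (.of R A) := by
  have hrs' : Function.LeftInverse r s := LinearMap.congr_fun hrs
  have := hB.finite
  refine ⟨.of_surjective r hrs'.surjective,
    ⟨bidualityMap_injective_iff.2 fun a ha => ?_, bidualityMap_surjective_iff.2 fun Φ => ?_⟩,
    fun i hi => (hB.extVanishes hi).of_retract_left s r hrs,
    fun i hi => (hB.extVanishes_dual hi).of_retract_left (LinearMap.lcomp R C r)
      (LinearMap.lcomp R C s) (LinearMap.ext fun φ => LinearMap.ext fun a => congrArg φ (hrs' a))⟩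
  · have hsa : s a = 0 := hB.eq_zero_of_forall_apply_eq_zero fun φ => ha (φ ∘ₗ s)
    rw [← hrs' a, hsa, map_zero]
  · obtain ⟨b, hb⟩ := hB.exists_apply_eq (Φ ∘ₗ LinearMap.lcomp R C s)
    refine ⟨r b, fun φ => (hb (φ ∘ₗ r)).trans (congrArg Φ (LinearMap.ext fun a => ?_))⟩
    exact congrArg φ (hrs' a)

lemma prod (hA : IsTotallyCReflexive R C (.of R A)) (hB : IsTotallyCReflexive R C (.of R B)) :
    IsTotallyCReflexive R C (.of R (A × B)) := by
  have := hA.finite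
  have := hB.finite
  refine ⟨inferInstanceAs (Module.Finite R (A × B)),
    ⟨bidualityMap_injective_iff.2 fun x hx => ?_, bidualityMap_surjective_iff.2 fun Φ => ?_⟩,
    fun i hi => isShortExact_inl_snd.extVanishes_middle (hA.extVanishes hi) (hB.extVanishes hi),
    fun i hi => (ExtVanishes.congr_left (LinearMap.coprodEquiv R)).1
      (isShortExact_inl_snd.extVanishes_middle (hA.extVanishes_dual hi) (hB.extVanishes_dual hi))⟩
  · exact Prod.ext
      (hA.eq_zero_of_forall_apply_eq_zero fun φ => hx (φ ∘ₗ LinearMap.fst R A B))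
      (hB.eq_zero_of_forall_apply_eq_zero fun φ => hx (φ ∘ₗ LinearMap.snd R A B))
  · obtain ⟨a, ha⟩ := hA.exists_apply_eq (Φ ∘ₗ LinearMap.lcomp R C (LinearMap.fst R A B))
    obtain ⟨b, hb⟩ := hB.exists_apply_eq (Φ ∘ₗ LinearMap.lcomp R C (LinearMap.snd R A B))
    refine ⟨(a, b), fun φ => ?_⟩
    obtain ⟨⟨φA, φB⟩, rfl⟩ := (LinearMap.coprodEquiv R).surjective φ
    calc φA a + φB b = Φ (φA ∘ₗ LinearMap.fst R A B) + Φ (φB ∘ₗ LinearMap.snd R A B) :=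
          congrArg₂ (· + ·) (ha φA) (hb φB)
      _ = Φ (φA.coprod φB) := (map_add Φ _ _).symm

lemma extVanishes_of_isShortExact_lcomp {f : A →ₗ[R] B} {q : (A →ₗ[R] C) →ₗ[R] D}
    (hA : IsTotallyCReflexive R C (.of R A)) (hB : IsTotallyCReflexive R C (.of R B))
    (hf : Function.Surjective f) (h : IsShortExact (LinearMap.lcomp R C f) q) (hi : 0 < i) :
    ExtVanishes R D C i := by
  obtain _ | _ | i := i
  · exact absurd hi (lt_irrefl 0)
  · refine (h.extVanishes_one_iff (hA.extVanishes_dual one_pos)).2 fun Φ => ?_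
    obtain ⟨b, hb⟩ := hB.exists_apply_eq Φ
    obtain ⟨a, rfl⟩ := hf b
    exact ⟨LinearMap.applyₗ a, LinearMap.ext hb⟩
  · exact h.extVanishes_right (hB.extVanishes_dual i.succ_pos) (hA.extVanishes_dual hi)

lemma of_isShortExact [IsNoetherianRing R] {f : A →ₗ[R] B} {g : B →ₗ[R] D}
    (h : IsShortExact f g) (hB : IsTotallyCReflexive R C (.of R B))
    (hD : IsTotallyCReflexive R C (.of R D)) : IsTotallyCReflexive R C (.of R A) := by
  have := hB.finite
  have hdual := h.lcomp (hD.extVanishes one_pos)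
  refine ⟨.of_injective f h.injective,
    ⟨bidualityMap_injective_iff.2 fun a ha => ?_, bidualityMap_surjective_iff.2 fun Φ => ?_⟩,
    fun i hi => h.extVanishes_left (hB.extVanishes hi) (hD.extVanishes i.succ_pos),
    fun i hi => extVanishes_of_isShortExact_lcomp hB hD h.surjective hdual hi⟩
  · refine (map_eq_zero_iff f h.injective).1 ?_
    exact hB.eq_zero_of_forall_apply_eq_zero fun φ => ha (φ ∘ₗ f)
  · obtain ⟨b, hb⟩ := hB.exists_apply_eq (Φ ∘ₗ LinearMap.lcomp R C f)
    have hgb : g b = 0 := hD.eq_zero_of_forall_apply_eq_zero fun φ => by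
      have hφ := congrArg Φ (hdual.exact.apply_apply_eq_zero φ)
      exact (hb (φ ∘ₗ g)).trans (hφ.trans (map_zero Φ))
    obtain ⟨a, rfl⟩ := (h.exact b).1 hgb
    refine ⟨a, fun φ => ?_⟩
    obtain ⟨ψ, rfl⟩ := hdual.surjective φ
    exact hb ψ

lemma exists_mem_ker_apply_eq {f : A →ₗ[R] B} (hA : IsTotallyCReflexive R C (.of R A))
    (hB : IsTotallyCReflexive R C (.of R B)) (Φ : DualCokernel C f →ₗ[R] C) :
    ∃ a, f a = 0 ∧ ∀ φ, φ a = Φ (Submodule.Quotient.mk φ) := by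
  obtain ⟨a, ha⟩ := hA.exists_apply_eq (Φ ∘ₗ Submodule.mkQ _)
  refine ⟨a, hB.eq_zero_of_forall_apply_eq_zero fun ψ => ?_, ha⟩
  have hψ : (Submodule.Quotient.mk (ψ ∘ₗ f) : DualCokernel C f) = 0 :=
    (Submodule.Quotient.mk_eq_zero _).2 ⟨ψ, rfl⟩
  exact (ha (ψ ∘ₗ f)).trans ((congrArg Φ hψ).trans (map_zero Φ))

end IsTotallyCReflexive

end Reflexive

section Semidualizing

variable {R}
variable {C : ModuleCat.{u} R} {A B : Type u} [AddCommGroup A] [Module R A] [AddCommGroup B]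
  [Module R B] {i : ℕ}

lemma finite_projective_induction {p : ModuleCat.{u} R → Prop} (ring : p (.of R R))
    (prod : ∀ A B : ModuleCat.{u} R, p A → p B → p (.of R (A × B)))
    (retract : ∀ (A B : ModuleCat.{u} R) (s : A →ₗ[R] B) (r : B →ₗ[R] A),
      r ∘ₗ s = LinearMap.id → p B → p A)
    (P : Type u) [AddCommGroup P] [Module R P] [Module.Finite R P] [Module.Projective R P] :
    p (.of R P) := by
  have free : ∀ n : ℕ, p (.of R (Fin n → R)) := by
    intro n
    induction n with
    | zero =>
      exact retract _ _ 0 0 (LinearMap.ext fun _ => Subsingleton.elim (α := Fin 0 → R) _ _) ring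
    | succ n ih =>
      let e := Fin.consLinearEquiv R (fun _ : Fin (n + 1) => R)
      exact retract _ _ e.symm.toLinearMap e.toLinearMap (LinearMap.ext e.apply_symm_apply)
        (prod _ _ ring ih)
  obtain ⟨n, f, hf⟩ := Module.Finite.exists_fin' R P
  obtain ⟨s, hs⟩ := Module.projective_lifting_property f LinearMap.id hf
  exact retract _ _ s f hs (free n)

namespace IsSemidualizing

lemma finite (hC : IsSemidualizing R C) : Module.Finite R C := hC.1

lemma extVanishes_self (hC : IsSemidualizing R C) (hi : 0 < i) : ExtVanishes R C C i :=
  hC.2.2 i hi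

/-- The homothety isomorphism `R ≃ Hom(C, C)`. -/
def homothetyEquiv (hC : IsSemidualizing R C) : R ≃ₗ[R] (C →ₗ[R] C) :=
  LinearEquiv.ofBijective (LinearMap.lsmul R C) hC.2.1

/-- The isomorphism `Hom(A, R) ≃ Hom(C, Hom(A, C))` induced by the homothety isomorphism. -/
def dualEquiv (hC : IsSemidualizing R C) (A : Type u) [AddCommGroup A] [Module R A] :
    (A →ₗ[R] R) ≃ₗ[R] (C →ₗ[R] A →ₗ[R] C) :=
  hC.homothetyEquiv.congrRight.trans LinearMap.lflip

lemma dualEquiv_comp (hC : IsSemidualizing R C) (ψ : B →ₗ[R] R) (f : A →ₗ[R] B) :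
    hC.dualEquiv A (ψ ∘ₗ f) = LinearMap.lcomp R C f ∘ₗ hC.dualEquiv B ψ := rfl

lemma isTotallyCReflexive_ring (hC : IsSemidualizing R C) :
    IsTotallyCReflexive R C (.of R R) := by
  refine ⟨inferInstanceAs (Module.Finite R R),
    ⟨bidualityMap_injective_iff.2 fun r hr => ?_, bidualityMap_surjective_iff.2 fun Φ => ?_⟩,
    fun i hi => extVanishes_of_projective hi,
    fun i hi => (ExtVanishes.congr_left (LinearMap.ringLmapEquivSelf R R C)).2
      (hC.extVanishes_self hi)⟩
  · exact (map_eq_zero_iff _ hC.homothetyEquiv.injective).1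
      (LinearMap.ext fun c => hr (LinearMap.toSpanSingleton R C c))
  · obtain ⟨r, hr⟩ := hC.homothetyEquiv.surjective
      (Φ ∘ₗ (LinearMap.ringLmapEquivSelf R R C).symm.toLinearMap)
    refine ⟨r, fun φ => ?_⟩
    calc φ r = r • φ 1 := by rw [← map_smul, smul_eq_mul, mul_one]
      _ = Φ ((LinearMap.ringLmapEquivSelf R R C).symm (φ 1)) := LinearMap.congr_fun hr (φ 1)
      _ = Φ φ := congrArg Φ ((LinearMap.ringLmapEquivSelf R R C).symm_apply_apply φ)

lemma isTotallyCReflexive_of_projective (hC : IsSemidualizing R C) (P : Type u) [AddCommGroup P]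
    [Module R P] [Module.Finite R P] [Module.Projective R P] :
    IsTotallyCReflexive R C (.of R P) :=
  finite_projective_induction hC.isTotallyCReflexive_ring (fun _ _ hA hB => hA.prod hB)
    (fun _ _ s r hrs hB => hB.retract s r hrs) P

lemma extVanishes_dual_of_projective (hC : IsSemidualizing R C) (P : Type u) [AddCommGroup P]
    [Module R P] [Module.Finite R P] [Module.Projective R P] (hi : 0 < i) :
    ExtVanishes R C (P →ₗ[R] C) i :=
  finite_projective_induction (p := fun A => ExtVanishes R C (A →ₗ[R] C) i)
    ((ExtVanishes.congr_right (LinearMap.ringLmapEquivSelf R R C)).2 (hC.extVanishes_self hi))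
    (fun _ _ hA hB => (ExtVanishes.congr_right (LinearMap.coprodEquiv R)).1
      (isShortExact_inl_snd.covariant_extVanishes_middle hA hB))
    (fun _ _ s r hrs hB => hB.of_retract_right (LinearMap.lcomp R C r) (LinearMap.lcomp R C s)
      (LinearMap.ext fun φ => LinearMap.ext fun a => congrArg φ (LinearMap.congr_fun hrs a))) P

lemma subsingleton_of_hom [IsNoetherianRing R] (hC : IsSemidualizing R C) [Module.Finite R A]
    (hA : Subsingleton (C →ₗ[R] A)) : Subsingleton A := by
  have := hC.finite
  obtain ⟨r, hr, hreg⟩ := IsSMulRegular.subsingleton_linearMap_iff.1 hA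
  have hr0 : r = 0 := (map_eq_zero_iff _ hC.homothetyEquiv.injective).1
    (LinearMap.ext fun c => Module.mem_annihilator.1 hr c)
  exact IsSMulRegular.zero_iff_subsingleton.1 (hr0 ▸ hreg)

end IsSemidualizing

end Semidualizing

section GCDimension

variable {R}
variable {A B D X P : Type u} [AddCommGroup A] [Module R A] [AddCommGroup B] [Module R B]
  [AddCommGroup D] [Module R D] [AddCommGroup X] [Module R X] [AddCommGroup P] [Module R P]

namespace IsShortExact

lemma exists_isShortExact_ker_comp {f : A →ₗ[R] B} {g : B →ₗ[R] D} (h : IsShortExact f g)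
    {w : P →ₗ[R] X} {y : X →ₗ[R] B} (hy : IsShortExact w y) :
    ∃ (w' : P →ₗ[R] LinearMap.ker (g ∘ₗ y)) (y' : LinearMap.ker (g ∘ₗ y) →ₗ[R] A),
      IsShortExact w' y' := by
  obtain ⟨y', hy'⟩ := h.exists_comp_eq (y ∘ₗ (LinearMap.ker (g ∘ₗ y)).subtype)
    (LinearMap.ext fun x => x.2)
  replace hy' : ∀ x, f (y' x) = y x.1 := LinearMap.congr_fun hy'
  have hw : ∀ p, w p ∈ LinearMap.ker (g ∘ₗ y) := fun p =>
    (congrArg g (hy.exact.apply_apply_eq_zero p)).trans (map_zero g)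
  refine ⟨w.codRestrict _ hw, y', fun p q hpq => hy.injective (congrArg Subtype.val hpq),
    fun a => ?_, fun x => ?_⟩
  · obtain ⟨x, hx⟩ := hy.surjective (f a)
    have hgx : g (y x) = 0 := by rw [hx, h.exact.apply_apply_eq_zero]
    exact ⟨⟨x, hgx⟩, h.injective ((hy' _).trans hx)⟩
  · calc y' x = 0 ↔ y x.1 = 0 := by rw [← hy', map_eq_zero_iff f h.injective]
      _ ↔ ∃ p, w p = x.1 := hy.exact _
      _ ↔ ∃ p, w.codRestrict _ hw p = x :=
        exists_congr fun p => (Subtype.ext_iff (a1 := w.codRestrict _ hw p)).symm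

lemma prodMap_id {f : A →ₗ[R] B} {g : B →ₗ[R] D} (h : IsShortExact f g) :
    IsShortExact (LinearMap.inl R B P ∘ₗ f) (g.prodMap (LinearMap.id : P →ₗ[R] P)) := by
  refine ⟨LinearMap.inl_injective.comp h.injective,
    h.surjective.prodMap Function.surjective_id, fun ⟨b, p⟩ => ?_⟩
  constructor
  · intro hbp
    obtain ⟨a, rfl⟩ := (h.exact b).1 (congrArg Prod.fst hbp)
    exact ⟨a, Prod.ext rfl (congrArg Prod.snd hbp).symm⟩
  · rintro ⟨a, ha⟩
    rw [← ha]
    exact Prod.ext (h.exact.apply_apply_eq_zero a) rfl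

-- Schanuel's construction: `A → D × P → X` is the kernel of `D × P → X`, the pullback of `π`.
lemma exists_isShortExact_coprod {ι : A →ₗ[R] P} {π : P →ₗ[R] B} (h : IsShortExact ι π)
    {f : D →ₗ[R] X} {g : X →ₗ[R] B} (hg : IsShortExact f g) (s : P →ₗ[R] X)
    (hs : g ∘ₗ s = π) : ∃ j : A →ₗ[R] D × P, IsShortExact j (f.coprod s) := by
  replace hs : ∀ p, g (s p) = π p := LinearMap.congr_fun hs
  obtain ⟨κ, hκ⟩ := hg.exists_comp_eq (-(s ∘ₗ ι)) (LinearMap.ext fun a => by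
    simp [hs, h.exact.apply_apply_eq_zero])
  replace hκ : ∀ a, f (κ a) = -s (ι a) := LinearMap.congr_fun hκ
  refine ⟨κ.prod ι, fun a b hab => h.injective (congrArg Prod.snd hab), fun x => ?_,
    fun ⟨l, p⟩ => ⟨fun hlp => ?_, ?_⟩⟩
  · obtain ⟨p, hp⟩ := h.surjective (g x)
    obtain ⟨l, hl⟩ := (hg.exact (x - s p)).1 (by rw [map_sub, hs, hp, sub_self])
    exact ⟨(l, p), by rw [LinearMap.coprod_apply, hl, sub_add_cancel]⟩
  · replace hlp : f l + s p = 0 := hlp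
    have hp : π p = 0 := by
      rw [← hs, eq_neg_of_add_eq_zero_right hlp, map_neg, hg.exact.apply_apply_eq_zero, neg_zero]
    obtain ⟨a, rfl⟩ := (h.exact p).1 hp
    exact ⟨a, Prod.ext (hg.injective ((hκ a).trans (eq_neg_of_add_eq_zero_left hlp).symm)) rfl⟩
  · rintro ⟨a, ha⟩
    rw [← ha]
    exact (congrArg (· + s (ι a)) (hκ a)).trans (neg_add_cancel _)

end IsShortExact

variable {C : ModuleCat.{u} R} {n : ℕ}

lemma gcdimLE_succ_iff : gcdimLE R C (n + 1) (.of R A) ↔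
    ∃ (X K : ModuleCat.{u} R) (f : K →ₗ[R] X) (g : X →ₗ[R] A),
      IsShortExact f g ∧ IsTotallyCReflexive R C X ∧ gcdimLE R C n K := by
  constructor
  · rintro ⟨X, K, f, g, hf, hg, hfg, hX, hK⟩
    exact ⟨X, K, f, g, ⟨hf, hg, LinearMap.exact_iff.2 hfg⟩, hX, hK⟩
  · rintro ⟨X, K, f, g, h, hX, hK⟩
    exact ⟨X, K, f, g, h.injective, h.surjective, h.exact.linearMap_ker_eq, hX, hK⟩

lemma gcdimLE.of_isShortExact [IsNoetherianRing R] {f : A →ₗ[R] B} {g : B →ₗ[R] D}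
    (h : IsShortExact f g) (hB : gcdimLE R C n (.of R B))
    (hD : IsTotallyCReflexive R C (.of R D)) : gcdimLE R C n (.of R A) := by
  obtain _ | n := n
  · exact IsTotallyCReflexive.of_isShortExact h hB hD
  · obtain ⟨Y, W, w, y, hy, hY, hW⟩ := gcdimLE_succ_iff.1 hB
    obtain ⟨w', y', hy'⟩ := h.exists_isShortExact_ker_comp hy
    have hker : IsTotallyCReflexive R C (.of R (LinearMap.ker (g ∘ₗ y))) :=
      IsTotallyCReflexive.of_isShortExact
        (isShortExact_ker (h.surjective.comp hy.surjective)) hY hD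
    exact gcdimLE_succ_iff.2 ⟨.of R (LinearMap.ker (g ∘ₗ y)), W, w', y', hy', hker, hW⟩

lemma gcdimLE.prod (hA : gcdimLE R C n (.of R A)) (hB : IsTotallyCReflexive R C (.of R B)) :
    gcdimLE R C n (.of R (A × B)) := by
  obtain _ | n := n
  · exact IsTotallyCReflexive.prod hA hB
  · obtain ⟨X, K, f, g, h, hX, hK⟩ := gcdimLE_succ_iff.1 hA
    exact gcdimLE_succ_iff.2 ⟨.of R (X × B), K, _, _, h.prodMap_id, hX.prod hB, hK⟩

lemma IsSemidualizing.gcdimLE_syzygy [IsNoetherianRing R] (hC : IsSemidualizing R C)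
    [Module.Finite R P] [Module.Projective R P] {ι : A →ₗ[R] P} {π : P →ₗ[R] B}
    (h : IsShortExact ι π) (hB : gcdimLE R C (n + 1) (.of R B)) : gcdimLE R C n (.of R A) := by
  obtain ⟨X, L, f, g, hg, hX, hL⟩ := gcdimLE_succ_iff.1 hB
  obtain ⟨s, hs⟩ := Module.projective_lifting_property g π hg.surjective
  obtain ⟨j, hj⟩ := h.exists_isShortExact_coprod hg s hs
  exact gcdimLE.of_isShortExact hj (gcdimLE.prod hL (hC.isTotallyCReflexive_of_projective P)) hX

end GCDimension

section Grade

variable {R}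
variable {C : ModuleCat.{u} R} {A B D E : Type u} [AddCommGroup A] [Module R A] [AddCommGroup B]
  [Module R B] [AddCommGroup D] [Module R D] [AddCommGroup E] [Module R E]

namespace IsSemidualizing

lemma extVanishes_zero_ring_iff [IsNoetherianRing R] (hC : IsSemidualizing R C)
    [Module.Finite R E] : ExtVanishes R E R 0 ↔ ExtVanishes R E C 0 := by
  have := hC.finite
  rw [extVanishes_zero_iff, extVanishes_zero_iff, (hC.dualEquiv E).toEquiv.subsingleton_congr]
  exact ⟨hC.subsingleton_of_hom, fun _ => inferInstance⟩

-- `Ext¹(D, C)` is the cokernel of `B^C → A^C`; applying `Hom(C, -)` to `0 → D^C → B^C → A^C`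
-- recovers `0 → Hom(D, R) → Hom(B, R) → Hom(A, R)`.
lemma subsingleton_dualCokernel_of_lcomp_ring_surjective [IsNoetherianRing R]
    (hC : IsSemidualizing R C) [Module.Finite R A] [Module.Finite R B] [Module.Projective R B]
    {f : A →ₗ[R] B} {g : B →ₗ[R] D} (h : IsShortExact f g)
    (hD : ExtVanishes R C (D →ₗ[R] C) 2) (hf : Function.Surjective (LinearMap.lcomp R R f)) :
    Subsingleton (DualCokernel C f) := by
  have := hC.finite
  have hdual : IsShortExact (LinearMap.lcomp R C g) (LinearMap.lcomp R C f).rangeRestrict :=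
    ⟨LinearMap.lcomp_injective_of_surjective g h.surjective,
      LinearMap.surjective_rangeRestrict _, fun φ => Subtype.ext_iff.trans
        (LinearMap.exact_lcomp_of_exact_of_surjective C h.exact h.surjective φ)⟩
  have hrange : ExtVanishes R C (LinearMap.range (LinearMap.lcomp R C f)) 1 :=
    hdual.covariant_extVanishes_right (hC.extVanishes_dual_of_projective B one_pos) hD
  refine hC.subsingleton_of_hom (subsingleton_of_forall_eq 0 fun θ => ?_)
  obtain ⟨Θ, rfl⟩ := (isShortExact_mkQ (LinearMap.range (LinearMap.lcomp R C f))).exists_lift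
    hrange θ
  obtain ⟨φ, rfl⟩ := (hC.dualEquiv A).surjective Θ
  obtain ⟨ψ, rfl⟩ := hf φ
  exact LinearMap.ext fun c => (Submodule.Quotient.mk_eq_zero _).2 ⟨hC.dualEquiv B ψ c, rfl⟩

lemma lcomp_ring_surjective (hC : IsSemidualizing R C) {f : A →ₗ[R] B} {g : B →ₗ[R] D}
    (h : IsShortExact f g) (hD : ExtVanishes R C (D →ₗ[R] C) 1) (hDC : ExtVanishes R D C 1) :
    Function.Surjective (LinearMap.lcomp R R f) := by
  intro φ
  obtain ⟨Ψ, hΨ⟩ := (h.lcomp hDC).exists_lift hD (hC.dualEquiv A φ)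
  obtain ⟨ψ, rfl⟩ := (hC.dualEquiv B).surjective Ψ
  exact ⟨ψ, (hC.dualEquiv A).injective ((hC.dualEquiv_comp ψ f).trans hΨ)⟩

lemma extVanishes_one_ring_iff [IsNoetherianRing R] (hC : IsSemidualizing R C)
    [Module.Finite R D] (hD : ∀ i, 0 < i → ExtVanishes R C (D →ₗ[R] C) i) :
    ExtVanishes R D R 1 ↔ ExtVanishes R D C 1 := by
  obtain ⟨n, g, hg⟩ := Module.Finite.exists_fin' R D
  have h := isShortExact_ker hg
  constructor
  · intro hDR
    refine (h.extVanishes_one_iff (extVanishes_of_projective one_pos)).2 ?_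
    exact subsingleton_dualCokernel_iff.1
      (hC.subsingleton_dualCokernel_of_lcomp_ring_surjective h (hD 2 two_pos)
        (h.lcomp_surjective hDR))
  · intro hDC
    exact (h.extVanishes_one_iff (extVanishes_of_projective one_pos)).2
      (hC.lcomp_ring_surjective h (hD 1 one_pos) hDC)

lemma forall_lt_extVanishes_succ_ring_iff [IsNoetherianRing R] (hC : IsSemidualizing R C) (m : ℕ)
    {D : Type u} [AddCommGroup D] [Module R D] [Module.Finite R D]
    (hD : ∀ i, 0 < i → ExtVanishes R C (D →ₗ[R] C) i) :
    (∀ i < m, ExtVanishes R D R (i + 1)) ↔ ∀ i < m, ExtVanishes R D C (i + 1) := by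
  induction m generalizing D with
  | zero => simp
  | succ m ih =>
    obtain ⟨n, g, hg⟩ := Module.Finite.exists_fin' R D
    have h := isShortExact_ker hg
    simp only [Nat.forall_lt_succ_left, zero_add, h.extVanishes_succ_iff (Nat.succ_pos _),
      hC.extVanishes_one_ring_iff hD]
    refine and_congr_right fun hDC => ih fun i hi => ?_
    exact (h.lcomp hDC).covariant_extVanishes_right (hC.extVanishes_dual_of_projective _ hi)
      (hD (i + 1) i.succ_pos)

lemma forall_lt_extVanishes_ring_iff [IsNoetherianRing R] (hC : IsSemidualizing R C) (m : ℕ)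
    [Module.Finite R E] :
    (∀ i < m, ExtVanishes R E R i) ↔ ∀ i < m, ExtVanishes R E C i := by
  obtain _ | m := m
  · simp
  · simp only [Nat.forall_lt_succ_left, hC.extVanishes_zero_ring_iff]
    refine and_congr_right fun hE => hC.forall_lt_extVanishes_succ_ring_iff m fun i hi => ?_
    have := extVanishes_zero_iff.1 hE
    exact (hC.extVanishes_self hi).of_retract_right 0 0
      (LinearMap.ext fun φ => Subsingleton.elim _ _)

end IsSemidualizing

lemma natCast_le_sInf_image_iff {n : ℕ} {s : Set ℕ} :
    (n : ℕ∞) ≤ sInf ((fun i : ℕ => (i : ℕ∞)) '' s) ↔ ∀ i ∈ s, n ≤ i := by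
  simp only [le_sInf_iff, Set.forall_mem_image, Nat.cast_le]

lemma natCast_le_gradeR_iff {n : ℕ} :
    (n : ℕ∞) ≤ gradeR R (.of R E) ↔ ∀ i < n, ExtVanishes R E R i :=
  natCast_le_sInf_image_iff.trans
    (forall_congr' fun _ => not_imp_comm.trans (imp_congr_left not_le))

lemma natCast_le_rgrade_iff {n : ℕ} :
    (n : ℕ∞) ≤ rgrade R C (.of R E) ↔ ∀ i, 0 < i → i < n → ExtVanishes R E C i :=
  natCast_le_sInf_image_iff.trans (forall_congr' fun _ => and_imp.trans
    (imp_congr_right fun _ => not_imp_comm.trans (imp_congr_left not_le)))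

end Grade

section Cokernel

variable {R}
variable {A B D : Type u} [AddCommGroup A] [Module R A] [AddCommGroup B] [Module R B]
  [AddCommGroup D] [Module R D]

lemma exists_isShortExact_cokernel_comp (f : A →ₗ[R] B) {g : B →ₗ[R] D}
    (hg : Function.Injective g) :
    ∃ (p : (B ⧸ LinearMap.range f) →ₗ[R] D ⧸ LinearMap.range (g ∘ₗ f))
      (q : (D ⧸ LinearMap.range (g ∘ₗ f)) →ₗ[R] D ⧸ LinearMap.range g), IsShortExact p q := by
  have hcomap : (LinearMap.range (g ∘ₗ f)).comap g = LinearMap.range f := by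
    rw [LinearMap.range_comp, Submodule.comap_map_eq_of_injective hg]
  have hle : LinearMap.range (g ∘ₗ f) ≤ LinearMap.range g := LinearMap.range_comp_le_range f g
  refine ⟨Submodule.mapQ _ _ g hcomap.ge, Submodule.factor hle, ?_,
    Submodule.factor_surjective hle, LinearMap.exact_iff.2 ?_⟩
  · rw [← LinearMap.ker_eq_bot, Submodule.mapQ, Submodule.ker_liftQ, LinearMap.ker_comp,
      Submodule.ker_mkQ, hcomap, Submodule.mkQ_map_self]
  · rw [Submodule.factor, Submodule.ker_mapQ, Submodule.range_mapQ, Submodule.comap_id]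

lemma exists_isShortExact_cokernel_of_exact {f : A →ₗ[R] B} {g : B →ₗ[R] D}
    (h : Function.Exact f g) :
    ∃ p : (B ⧸ LinearMap.range f) →ₗ[R] D,
      p ∘ₗ (LinearMap.range f).mkQ = g ∧ IsShortExact p (LinearMap.range g).mkQ := by
  refine ⟨(LinearMap.range f).liftQ g h.linearMap_ker_eq.ge, Submodule.liftQ_mkQ _ _ _,
    LinearMap.injective_range_liftQ_of_exact h, Submodule.mkQ_surjective _,
    LinearMap.exact_iff.2 ?_⟩
  rw [Submodule.ker_mkQ, Submodule.range_liftQ]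

end Cokernel

section Transpose

variable {R}
variable {C : ModuleCat.{u} R} {P₂ P₁ P₀ L K M : Type u}
  [AddCommGroup P₂] [Module R P₂] [AddCommGroup P₁] [Module R P₁] [AddCommGroup P₀] [Module R P₀]
  [AddCommGroup L] [Module R L] [AddCommGroup K] [Module R K] [AddCommGroup M] [Module R M]
  {i n k : ℕ}

namespace IsTotallyCReflexive

lemma extVanishes_zero_dualCokernel {f : K →ₗ[R] P₀} (hK : IsTotallyCReflexive R C (.of R K))
    (hP₀ : IsTotallyCReflexive R C (.of R P₀)) (hf : Function.Injective f) :
    ExtVanishes R (DualCokernel C f) C 0 := by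
  refine extVanishes_zero_iff.2 (subsingleton_of_forall_eq 0 fun Φ => ?_)
  obtain ⟨a, hfa, ha⟩ := hK.exists_mem_ker_apply_eq hP₀ Φ
  obtain rfl : a = 0 := (map_eq_zero_iff f hf).1 hfa
  exact Submodule.linearMap_qext _ (LinearMap.ext fun φ => (ha φ).symm.trans (map_zero φ))

lemma extVanishes_dualCokernel_comp_iff (hP₁ : IsTotallyCReflexive R C (.of R P₁))
    (hK : IsTotallyCReflexive R C (.of R K)) {p : P₁ →ₗ[R] K} (hp : Function.Surjective p)
    (f : K →ₗ[R] P₀) (hi : 0 < i) :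
    ExtVanishes R (DualCokernel C (f ∘ₗ p)) C i ↔ ExtVanishes R (DualCokernel C f) C i := by
  have hpinj : Function.Injective (LinearMap.lcomp R C p) :=
    LinearMap.lcomp_injective_of_surjective p hp
  have hdual {i : ℕ} (hi : 0 < i) : ExtVanishes R (DualCokernel C p) C i :=
    extVanishes_of_isShortExact_lcomp hP₁ hK hp (isShortExact_range_mkQ hpinj) hi
  obtain ⟨_, _, h⟩ := exists_isShortExact_cokernel_comp (LinearMap.lcomp R C f) hpinj
  exact ⟨fun hfp => h.extVanishes_left hfp (hdual i.succ_pos),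
    fun hf => h.extVanishes_middle hf (hdual hi)⟩

lemma extVanishes_one_dualCokernel (hP₂ : IsTotallyCReflexive R C (.of R P₂))
    (hP₁ : IsTotallyCReflexive R C (.of R P₁)) (hP₀ : IsTotallyCReflexive R C (.of R P₀))
    {d₂ : P₂ →ₗ[R] P₁} {d₁ : P₁ →ₗ[R] P₀} (hd : Function.Exact d₂ d₁)
    (hdual : Function.Exact (LinearMap.lcomp R C d₁) (LinearMap.lcomp R C d₂)) :
    ExtVanishes R (DualCokernel C d₂) C 1 := by
  obtain ⟨q, hq, h⟩ := exists_isShortExact_cokernel_of_exact hdual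
  refine (h.extVanishes_one_iff (hP₂.extVanishes_dual one_pos)).2 fun Φ => ?_
  obtain ⟨x, hx, hΦ⟩ := hP₁.exists_mem_ker_apply_eq hP₀ Φ
  obtain ⟨y, rfl⟩ := (hd x).1 hx
  refine ⟨LinearMap.applyₗ y, Submodule.linearMap_qext _ (LinearMap.ext fun φ => ?_)⟩
  exact (LinearMap.congr_fun (LinearMap.congr_fun hq φ) y).trans (hΦ φ)

lemma extVanishes_succ_dualCokernel_iff (hP₂ : IsTotallyCReflexive R C (.of R P₂))
    {d₂ : P₂ →ₗ[R] P₁} {d₁ : P₁ →ₗ[R] P₀}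
    (hdual : Function.Exact (LinearMap.lcomp R C d₁) (LinearMap.lcomp R C d₂)) (hi : 0 < i) :
    ExtVanishes R (DualCokernel C d₂) C (i + 1) ↔ ExtVanishes R (DualCokernel C d₁) C i := by
  obtain ⟨_, -, h⟩ := exists_isShortExact_cokernel_of_exact hdual
  exact ⟨h.extVanishes_left (hP₂.extVanishes_dual hi),
    fun hd₁ => h.extVanishes_right hd₁ (hP₂.extVanishes_dual i.succ_pos)⟩

end IsTotallyCReflexive

lemma IsShortExact.exact_lcomp_comp {ι : K →ₗ[R] P₀} {π : P₀ →ₗ[R] M} (h : IsShortExact ι π)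
    {κ : L →ₗ[R] P₁} {p : P₁ →ₗ[R] K} (h' : IsShortExact κ p) {q : P₂ →ₗ[R] L}
    (hq : Function.Surjective q) (hM : ExtVanishes R M C 1) :
    Function.Exact (LinearMap.lcomp R C (ι ∘ₗ p)) (LinearMap.lcomp R C (κ ∘ₗ q)) :=
  have hqinj : Function.Injective (LinearMap.lcomp R C q) :=
    LinearMap.lcomp_injective_of_surjective q hq
  (h.lcomp_surjective hM).comp_exact_iff_exact.2 (hqinj.comp_exact_iff_exact.2
    (LinearMap.exact_lcomp_of_exact_of_surjective C h'.exact h'.surjective))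

lemma IsSemidualizing.forall_extVanishes_dualCokernel_iff [IsNoetherianRing R]
    (hC : IsSemidualizing R C) [Module.Finite R P₁] [Module.Projective R P₁] [Module.Finite R P₀]
    [Module.Projective R P₀] {ι : K →ₗ[R] P₀} {π : P₀ →ₗ[R] M} (h : IsShortExact ι π)
    {p : P₁ →ₗ[R] K} (hp : Function.Surjective p) (hM : gcdimLE R C (n + 1) (.of R M))
    (hMC : ∀ i, 0 < i → i < n + 1 → ExtVanishes R M C i) :
    (∀ i < k, ExtVanishes R (DualCokernel C (ι ∘ₗ p)) C (i + 1)) ↔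
      ∀ i < n + 1 + k, ExtVanishes R (ExtM R (.of R M) C (n + 1)) C i := by
  have hP₀ := hC.isTotallyCReflexive_of_projective P₀
  have hP₁ := hC.isTotallyCReflexive_of_projective P₁
  induction n generalizing M P₀ P₁ K k with
  | zero =>
    have hK : IsTotallyCReflexive R C (.of R K) := hC.gcdimLE_syzygy h hM
    obtain ⟨e⟩ := h.nonempty_dualCokernel_equiv_extM (N := C) (extVanishes_of_projective one_pos)
    have hcongr {i : ℕ} : ExtVanishes R (DualCokernel C ι) C i ↔
        ExtVanishes R (ExtM R (.of R M) C 1) C i := ExtVanishes.congr_left e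
    rw [zero_add, add_comm 1 k, Nat.forall_lt_succ_left, ← hcongr,
      and_iff_right (hK.extVanishes_zero_dualCokernel hP₀ h.injective)]
    exact forall₂_congr fun i _ =>
      (hP₁.extVanishes_dualCokernel_comp_iff hK hp ι i.succ_pos).trans hcongr
  | succ n ih =>
    obtain ⟨m, q, hq⟩ := Module.Finite.exists_fin' R (LinearMap.ker p)
    have hP₂ := hC.isTotallyCReflexive_of_projective (Fin m → R)
    have h' := isShortExact_ker hp
    obtain ⟨e⟩ := h.nonempty_extM_equiv_extM_succ (N := C) (i := n)
      (extVanishes_of_projective n.succ_pos) (extVanishes_of_projective (n + 1).succ_pos)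
    have hKC (i : ℕ) (hi : 0 < i) (hin : i < n + 1) : ExtVanishes R K C i :=
      (h.extVanishes_succ_iff hi).1 (hMC (i + 1) i.succ_pos (Nat.succ_lt_succ hin))
    have hd : Function.Exact ((LinearMap.ker p).subtype ∘ₗ q) (ι ∘ₗ p) :=
      hq.comp_exact_iff_exact.2 (h.injective.comp_exact_iff_exact.2 h'.exact)
    have hdual := h.exact_lcomp_comp h' hq (hMC 1 one_pos (by omega))
    have syzygy := ih h' hq (hC.gcdimLE_syzygy h hM) hKC hP₁ hP₂ (k := k + 1)
    rw [Nat.forall_lt_succ_left, and_iff_right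
      (hP₂.extVanishes_one_dualCokernel hP₁ hP₀ hd hdual)] at syzygy
    calc _ ↔ ∀ i < k, ExtVanishes R (DualCokernel C (_ ∘ₗ q)) C (i + 1 + 1) :=
          forall₂_congr fun i _ => (hP₂.extVanishes_succ_dualCokernel_iff hdual i.succ_pos).symm
      _ ↔ ∀ i < n + 1 + (k + 1), ExtVanishes R (ExtM R (.of R K) C (n + 1)) C i := syzygy
      _ ↔ _ := by
        rw [show n + 1 + 1 + k = n + 1 + (k + 1) by omega]
        exact forall₂_congr fun i _ => ExtVanishes.congr_left e

end Transpose

section Torsionless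

variable {R}
variable {C M N : ModuleCat.{u} R} {n k : ℕ}

lemma finite_extM_succ [IsNoetherianRing R] [Module.Finite R M] [Module.Finite R N] :
    Module.Finite R (ExtM R M N (n + 1)) := by
  obtain ⟨e⟩ := nonempty_extM_succ_equiv_abelianExt M N n
  have := ModuleCat.finite_ext R M N (n + 1)
  exact .equiv e.symm

lemma exists_isMinimalPresentation [IsNoetherianRing R] (hsp : IsSemiperfectRing R)
    (hM : Module.Finite R M) : ∃ (P₁ P₀ : ModuleCat.{u} R) (d : P₁ →ₗ[R] P₀) (π : P₀ →ₗ[R] M),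
      IsMinimalPresentation R d π := by
  obtain ⟨P₀, π, hP₀, hπ⟩ := hsp M hM
  obtain ⟨P₁, (p : P₁ →ₗ[R] LinearMap.ker π), hP₁, hproj, hp, hsuperfluous⟩ :=
    hsp (.of R (LinearMap.ker π)) (inferInstanceAs (Module.Finite R (LinearMap.ker π)))
  refine ⟨P₁, P₀, (LinearMap.ker π).subtype ∘ₗ p, π, hP₁, hP₀, hπ, ?_, hproj, fun N hN => ?_⟩
  · rw [LinearMap.range_comp_of_range_eq_top _ (LinearMap.range_eq_top.2 hp),
      Submodule.range_subtype]
  · rw [LinearMap.ker_comp, Submodule.ker_subtype] at hN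
    exact hsuperfluous N hN

lemma isCkTorsionless_iff_of_forall_isMinimalPresentation [IsNoetherianRing R]
    (hsp : IsSemiperfectRing R) (hM : Module.Finite R M) {q : Prop}
    (h : ∀ (P₁ P₀ : ModuleCat.{u} R) (d : P₁ →ₗ[R] P₀) (π : P₀ →ₗ[R] M),
      IsMinimalPresentation R d π →
        ((∀ i, 0 < i → i ≤ k → ExtVanishes R (DualCokernel C d) C i) ↔ q)) :
    IsCkTorsionless R C M k ↔ q := by
  obtain ⟨P₁, P₀, d, π, hmin⟩ := exists_isMinimalPresentation hsp hM
  constructor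
  · rintro (rfl | hT)
    · exact (h P₁ P₀ d π hmin).1 fun i hi hi0 => absurd hi hi0.not_gt
    · exact (h P₁ P₀ d π hmin).1 (hT (.of R (DualCokernel C d))
        ⟨P₁, P₀, d, π, hmin, ⟨LinearEquiv.refl R _⟩⟩)
  · rintro hq
    refine .inr fun T ⟨Q₁, Q₀, d', π', hmin', ⟨e⟩⟩ i hi hik => ?_
    exact (ExtVanishes.congr_left e).2 ((h Q₁ Q₀ d' π' hmin').2 hq i hi hik)

lemma gcdimLE_of_gcdim_eq (h : gcdim R C M = n) : gcdimLE R C n M := by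
  have hne : ((fun i : ℕ => (i : ℕ∞)) '' {i | gcdimLE R C i M}).Nonempty := by
    refine Set.nonempty_iff_ne_empty.2 fun hempty => ENat.natCast_ne_top n ?_
    rw [← h, gcdim, hempty, sInf_empty]
  obtain ⟨m, hm, hmn⟩ := csInf_mem hne
  obtain rfl : m = n := Nat.cast_injective (hmn.trans h)
  exact hm

lemma rgrade_pos : 0 < rgrade R C M :=
  Order.one_le_iff_pos.1
    (natCast_le_rgrade_iff (n := 1).2 fun _ hi hi1 => absurd hi (Nat.lt_one_iff.1 hi1).not_gt)

lemma IsReducedGCPerfect.pos (hM : IsReducedGCPerfect R C M) (h : gcdim R C M = n) : 0 < n :=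
  Nat.cast_pos.1 ((hM.2.trans h) ▸ rgrade_pos)

theorem statement19_general [IsNoetherianRing R] (hC : IsSemidualizing R C) (hn : 0 < n)
    (hM : gcdimLE R C n M) (hMC : (n : ℕ∞) ≤ rgrade R C M) {P₁ P₀ : ModuleCat.{u} R}
    [Module.Finite R P₁] [Module.Projective R P₁] [Module.Finite R P₀] [Module.Projective R P₀]
    {d : P₁ →ₗ[R] P₀} {π : P₀ →ₗ[R] M} (hd : Function.Exact d π) (hπ : Function.Surjective π) :
    (∀ i, 0 < i → i ≤ k → ExtVanishes R (DualCokernel C d) C i) ↔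
      ((n + k : ℕ) : ℕ∞) ≤ gradeR R (ExtM R M C n) := by
  obtain ⟨n, rfl⟩ := Nat.exists_eq_succ_of_ne_zero hn.ne'
  have := hC.finite
  have : Module.Finite R M := .of_surjective π hπ
  have : Module.Finite R (ExtM R M C (n + 1)) := finite_extM_succ
  let p : P₁ →ₗ[R] LinearMap.ker π := d.codRestrict _ hd.apply_apply_eq_zero
  have hp : Function.Surjective p := by
    rintro ⟨x, hx⟩
    obtain ⟨y, rfl⟩ := (hd x).1 hx
    exact ⟨y, rfl⟩
  have transpose := hC.forall_extVanishes_dualCokernel_iff (k := k) (isShortExact_ker hπ) hp hM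
    (natCast_le_rgrade_iff.1 hMC)
  rw [← hC.forall_lt_extVanishes_ring_iff] at transpose
  refine Iff.trans ⟨fun h i hi => h (i + 1) i.succ_pos hi, fun h i hi hik => ?_⟩
    (transpose.trans natCast_le_gradeR_iff.symm)
  obtain ⟨j, rfl⟩ := Nat.exists_eq_succ_of_ne_zero hi.ne'
  exact h j hik

end Torsionless

/-- if `M` is reduced `G_C`-perfect of `G_C`-dimension `n` and `k ≥ 0`,
then `M` is `C`-`k`-torsionless iff `grade(Ext_R^n(M,C)) ≥ n + k`. -/
theorem statement19 [IsNoetherianRing R] (hsp : IsSemiperfectRing R)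
    (C : ModuleCat.{u} R) (hC : IsSemidualizing R C)
    (M : ModuleCat.{u} R) (hMfin : Module.Finite R ↥M)
    (n : ℕ) (hred : IsReducedGCPerfect R C M) (hdim : gcdim R C M = n)
    (k : ℕ) :
    IsCkTorsionless R C M k ↔
      ((n + k : ℕ) : ℕ∞) ≤ gradeR R (ExtM R M C n) := by
  exact isCkTorsionless_iff_of_forall_isMinimalPresentation hsp hMfin
    fun _ _ _ _ ⟨_, _, ⟨_, hπ, _⟩, hd, _, _⟩ =>
      statement19_general hC (hred.pos hdim) (gcdimLE_of_gcdim_eq hdim) (hred.2.trans hdim).ge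
        (LinearMap.exact_iff.2 hd.symm) hπ

end
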